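/- For the case q = 0, the average redundancy of Scheme B is asymptotically (1/2) log₂ n + 1 + β: writing n = 2m, one has lim_{m→∞} [ 1 + 2^{−(2m−1)} · Σ_{i=1}^{m} i · (4i/(2m)) · C(2m, m+i) · log₂ i − (1/2) log₂(2m) ] = 1 + β, where β = (2 − ln 4 − γ)/(ln 4) − 1/2, γ is the Euler–Mascheroni constant, and C(a,b) denotes the binomial coefficient (numerically 1 + β ≈ 0.526). -/

import Mathlib

open Filter Topology MeasureTheory Set

/-- The binomial coefficient at distance `i` from the centre of row `2 * m`, relative to the central
one. -/
noncomputable def chooseRatio (m i : ℕ) : ℝ :=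
  (Nat.choose (2 * m) (m + i) : ℝ) / Nat.choose (2 * m) m

lemma chooseRatio_zero (m : ℕ) : chooseRatio m 0 = 1 := by
  have : (Nat.choose (2 * m) m : ℝ) ≠ 0 := by
    exact_mod_cast (Nat.choose_pos (by omega)).ne'
  simp [chooseRatio, this]

lemma chooseRatio_nonneg (m i : ℕ) : 0 ≤ chooseRatio m i := by
  unfold chooseRatio; positivity

lemma chooseRatio_eq_zero {m i : ℕ} (h : m < i) : chooseRatio m i = 0 := by
  simp [chooseRatio, Nat.choose_eq_zero_of_lt (show 2 * m < m + i by omega)]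

lemma chooseRatio_succ {m i : ℕ} (h : i ≤ m) :
    chooseRatio m (i + 1) = chooseRatio m i * ((m - i) / (m + i + 1)) := by
  have h1 := Nat.choose_succ_right_eq (2 * m) (m + i)
  rw [show 2 * m - (m + i) = m - i by omega] at h1
  have h2 : (Nat.choose (2 * m) (m + i + 1) : ℝ) * (m + i + 1)
      = Nat.choose (2 * m) (m + i) * (m - i) := by
    rw [← Nat.cast_sub h]; exact_mod_cast h1
  have h3 : (m + i + 1 : ℝ) ≠ 0 := by positivity
  rw [chooseRatio, chooseRatio, ← add_assoc, eq_div_of_mul_eq h3 h2]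
  ring

lemma chooseRatio_le_exp_of_le {m i j : ℕ} (hi : i ≤ m) (hj : j ≤ i) :
    chooseRatio m j ≤ Real.exp (-(j ^ 2 / (m + i))) := by
  induction j with
  | zero => simp [chooseRatio_zero]
  | succ j ih =>
    have hm : (j + 1 : ℝ) ≤ i := by exact_mod_cast hj
    have hm' : (i : ℝ) ≤ m := by exact_mod_cast hi
    have hj0 : (0 : ℝ) ≤ j := by positivity
    rw [chooseRatio_succ (by omega)]
    have h1 : ((m : ℝ) - j) / (m + j + 1) ≤ Real.exp (-((2 * j + 1) / (m + i))) := by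
      calc ((m : ℝ) - j) / (m + j + 1) = -((2 * j + 1) / (m + j + 1)) + 1 := by
            field_simp; ring
        _ ≤ Real.exp (-((2 * j + 1) / (m + j + 1))) := Real.add_one_le_exp _
        _ ≤ _ := by
            apply Real.exp_le_exp.2
            apply neg_le_neg
            apply div_le_div_of_nonneg_left <;> linarith
    calc _ ≤ Real.exp (-(j ^ 2 / (m + i))) * Real.exp (-((2 * j + 1) / (m + i))) := by
          apply mul_le_mul (ih (by omega)) h1 _ (Real.exp_pos _).le
          apply div_nonneg <;> linarith
      _ = _ := by rw [← Real.exp_add]; push_cast; ring_nf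

lemma exp_le_chooseRatio_of_lt {m i j : ℕ} (hi : i < m) (hj : j ≤ i) :
    Real.exp (-(j ^ 2 / (m - i))) ≤ chooseRatio m j := by
  induction j with
  | zero => simp [chooseRatio_zero]
  | succ j ih =>
    have hm : (j + 1 : ℝ) ≤ i := by exact_mod_cast hj
    have hm' : (i : ℝ) < m := by exact_mod_cast hi
    have hj0 : (0 : ℝ) ≤ j := by positivity
    rw [chooseRatio_succ (by omega)]
    have hd : (0 : ℝ) < m - j := by linarith
    have h1 : Real.exp (-((2 * j + 1) / (m - i))) ≤ ((m : ℝ) - j) / (m + j + 1) := by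
      rw [Real.exp_neg, ← inv_div (m + j + 1 : ℝ) (m - j)]
      apply inv_anti₀ (by positivity)
      calc ((m + j + 1 : ℝ)) / (m - j) = ((2 * j + 1) / (m - j)) + 1 := by
            field_simp; ring
        _ ≤ Real.exp (((2 * j + 1) / (m - j))) := Real.add_one_le_exp _
        _ ≤ _ := by
            apply Real.exp_le_exp.2
            apply div_le_div_of_nonneg_left <;> linarith
    calc _ = Real.exp (-(j ^ 2 / (m - i))) * Real.exp (-((2 * j + 1) / (m - i))) := by
          rw [← Real.exp_add]; push_cast; ring_nf
      _ ≤ _ := mul_le_mul (ih (by omega)) h1 (Real.exp_pos _).le (chooseRatio_nonneg _ _)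

lemma sum_sq_mul_choose (k : ℕ) :
    ∑ i ∈ Finset.Icc 1 (k + 1), (i : ℝ) ^ 2 * Nat.choose (2 * (k + 1)) (k + 1 + i)
      = (k + 1) * 4 ^ k := by
  have key : ∀ i : ℕ, ((i : ℝ) + 1) * Nat.choose (2 * (k + 1)) (k + 1 + (i + 1))
      = (k + 1) * (Nat.choose (2 * k + 1) (k + 1 + i) - Nat.choose (2 * k + 1) (k + 1 + (i + 1))) := by
    intro i
    have h1 : Nat.choose (2 * (k + 1)) (k + 1 + (i + 1))
      = Nat.choose (2 * k + 1) (k + 1 + i) + Nat.choose (2 * k + 1) (k + 1 + (i + 1)) := rfl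
    have h2 : (Nat.choose (2 * (k + 1)) (k + 1 + (i + 1)) : ℝ) * (k + 1 + (i + 1)) =
        (2 * k + 2) * Nat.choose (2 * k + 1) (k + 1 + i) := by
      have := Nat.add_one_mul_choose_eq (2 * k + 1) (k + 1 + i)
      have h3 : Nat.choose (2 * (k + 1)) (k + 1 + (i + 1)) * (k + 1 + (i + 1)) =
        (2 * k + 2) * Nat.choose (2 * k + 1) (k + 1 + i) := by
          rw [this.trans rfl]; rfl
      exact_mod_cast h3
    have h1' : (Nat.choose (2 * (k + 1)) (k + 1 + (i + 1)) : ℝ)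
      = Nat.choose (2 * k + 1) (k + 1 + i) + Nat.choose (2 * k + 1) (k + 1 + (i + 1)) := by
      exact_mod_cast h1
    linear_combination h2 - (k + 1) * h1'
  have tele : ∀ N : ℕ, ∑ i ∈ Finset.range N, ((i : ℝ) + 1) ^ 2 * Nat.choose (2 * (k + 1)) (k + 1 + (i + 1))
     = (k + 1) * (∑ i ∈ Finset.range N, (Nat.choose (2 * k + 1) (k + 1 + i) : ℝ) -
        N * Nat.choose (2 * k + 1) (k + 1 + N)) := by
    intro N
    induction N with
    | zero => simp
    | succ N ih =>
      rw [Finset.sum_range_succ, Finset.sum_range_succ, ih]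
      push_cast
      linear_combination (N + 1 : ℝ) * key N
  have half : ∑ i ∈ Finset.range (k + 1), (Nat.choose (2 * k + 1) (k + 1 + i) : ℝ) = 4 ^ k := by
    rw [← Nat.cast_sum]
    rw [← Finset.sum_range_reflect]
    have := Nat.sum_range_choose_halfway k
    rw [← Finset.sum_congr rfl (fun i hi => ?_)] at this
    · exact_mod_cast this
    · have := Finset.mem_range.1 hi
      rw [← Nat.choose_symm (by omega)]
      congr 1; omega
  rw [← Finset.Ico_add_one_right_eq_Icc, Finset.sum_Ico_eq_sum_range]
  have := tele (k + 1)
  rw [half, Nat.choose_eq_zero_of_lt (show 2 * k + 1 < k + 1 + (k + 1) by omega)] at this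
  simpa [add_comm] using this

lemma integral_comp_natCeil {G : ℕ → ℝ} {m : ℕ} (hG : ∀ k, m < k → G k = 0) :
    ∫ x in Ioi (0 : ℝ), G ⌈x⌉₊ = ∑ i ∈ Finset.Icc 1 m, G i := by
  have hceil : ∀ k : ℕ, ∀ x ∈ Ioc (k : ℝ) ((k + 1 : ℕ) : ℝ), G ⌈x⌉₊ = G (k + 1) := by
    intro k x hx
    rw [(Nat.ceil_eq_iff (Nat.succ_ne_zero k)).2 ⟨by simpa using hx.1, hx.2⟩]
  have hle : ∀ k : ℕ, (k : ℝ) ≤ ((k + 1 : ℕ) : ℝ) := fun k => by push_cast; linarith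
  have h1 : ∫ x in Ioi (0 : ℝ), G ⌈x⌉₊ = ∫ x in Ioc (0 : ℝ) m, G ⌈x⌉₊ := by
    refine setIntegral_eq_of_subset_of_forall_sdiff_eq_zero measurableSet_Ioi
      Ioc_subset_Ioi_self fun x hx => hG _ ?_
    rw [Nat.lt_ceil]
    by_contra! h
    exact hx.2 ⟨hx.1, h⟩
  have hint : ∀ k < m, IntervalIntegrable (fun x : ℝ => G ⌈x⌉₊) volume (k : ℝ)
      ((k + 1 : ℕ) : ℝ) := by
    intro k _
    rw [intervalIntegrable_iff_integrableOn_Ioc_of_le (hle k)]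
    exact (integrableOn_congr_fun (hceil k) measurableSet_Ioc).2 (by simp)
  have h2 := intervalIntegral.sum_integral_adjacent_intervals hint
  rw [h1, ← intervalIntegral.integral_of_le (Nat.cast_nonneg m), ← Nat.cast_zero, ← h2,
    ← Finset.Ico_add_one_right_eq_Icc, Finset.sum_Ico_eq_sum_range]
  refine Finset.sum_congr rfl fun k _ => ?_
  rw [intervalIntegral.integral_of_le (hle k),
    setIntegral_congr_fun measurableSet_Ioc (hceil k)]
  simp [add_comm]

lemma tendsto_natCeil_mul_sqrt_div {x : ℝ} (hx : 0 < x) :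
    Tendsto (fun m : ℕ => (⌈x * √m⌉₊ : ℝ) / √m) atTop (𝓝 x) :=
  (tendsto_nat_ceil_mul_div_atTop hx.le).comp
    (Real.tendsto_sqrt_atTop.comp tendsto_natCast_atTop_atTop)

lemma tendsto_chooseRatio {x : ℝ} (hx : 0 < x) :
    Tendsto (fun m : ℕ => chooseRatio m ⌈x * √m⌉₊) atTop (𝓝 (Real.exp (-x ^ 2))) := by
  have hu := tendsto_natCeil_mul_sqrt_div hx
  have hs : Tendsto (fun m : ℕ => (√(m : ℝ))⁻¹) atTop (𝓝 0) :=
    tendsto_inv_atTop_zero.comp (Real.tendsto_sqrt_atTop.comp tendsto_natCast_atTop_atTop)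
  have hv : Tendsto (fun m : ℕ => (⌈x * √m⌉₊ : ℝ) / m) atTop (𝓝 0) := by
    have := hu.mul hs
    rw [mul_zero] at this
    refine this.congr fun m => ?_
    rw [← div_eq_mul_inv, div_div, Real.mul_self_sqrt (Nat.cast_nonneg m)]
  have hlt : ∀ᶠ m : ℕ in atTop, ⌈x * √m⌉₊ < m := by
    filter_upwards [hv.eventually_lt_const one_pos, eventually_gt_atTop 0] with m hm h0
    rw [div_lt_one (by exact_mod_cast h0)] at hm
    exact_mod_cast hm
  have lim : ∀ c : ℝ, Tendsto (fun m : ℕ =>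
      Real.exp (-((⌈x * √m⌉₊ : ℝ) ^ 2 / (m + c * ⌈x * √m⌉₊)))) atTop
      (𝓝 (Real.exp (-x ^ 2))) := by
    intro c
    refine (Real.continuous_exp.tendsto _).comp (Tendsto.neg ?_)
    have h := (hu.pow 2).div ((hv.const_mul c).const_add 1) (by simp)
    rw [mul_zero, add_zero, div_one] at h
    refine h.congr' ?_
    filter_upwards [eventually_gt_atTop 0] with m h0
    have h0' : (0 : ℝ) < m := by exact_mod_cast h0
    simp only [Pi.div_apply]
    rw [div_pow, Real.sq_sqrt h0'.le, div_div, mul_add, mul_one]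
    congr 2
    field_simp
  refine tendsto_of_tendsto_of_tendsto_of_le_of_le' (lim (-1)) (lim 1) ?_ ?_
  · filter_upwards [hlt] with m hm
    simpa [← sub_eq_add_neg] using exp_le_chooseRatio_of_lt hm le_rfl
  · filter_upwards [hlt] with m hm
    simpa using chooseRatio_le_exp_of_le hm.le le_rfl

lemma chooseRatio_le_exp (m i : ℕ) : chooseRatio m i ≤ Real.exp (-(i ^ 2 / (2 * m))) := by
  rcases lt_or_ge m i with h | h
  · rw [chooseRatio_eq_zero h]; positivity
  · refine (chooseRatio_le_exp_of_le h le_rfl).trans (Real.exp_le_exp.2 (neg_le_neg ?_))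
    rcases Nat.eq_zero_or_pos m with rfl | hm
    · simp [Nat.le_zero.1 h]
    · have hm' : (0 : ℝ) < m := by exact_mod_cast hm
      have h' : (i : ℝ) ≤ m := by exact_mod_cast h
      apply div_le_div_of_nonneg_left <;> first | positivity | linarith

lemma tendsto_sum_mul_chooseRatio {φ : ℝ → ℝ} (hφ : ContinuousOn φ (Ioi 0))
    (hb : ∀ u, 0 < u → |φ u| ≤ u + u ^ 3) :
    Tendsto (fun m : ℕ => (√m)⁻¹ * ∑ i ∈ Finset.Icc 1 m, φ (i / √m) * chooseRatio m i) atTop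
      (𝓝 (∫ x in Ioi (0 : ℝ), φ x * Real.exp (-x ^ 2))) := by
  have hsum : ∀ᶠ m : ℕ in atTop,
      ∫ x in Ioi (0 : ℝ), φ (⌈x * √m⌉₊ / √m) * chooseRatio m ⌈x * √m⌉₊ =
        (√m)⁻¹ * ∑ i ∈ Finset.Icc 1 m, φ (i / √m) * chooseRatio m i := by
    filter_upwards [eventually_gt_atTop 0] with m h0
    have h0' : (0 : ℝ) < √m := Real.sqrt_pos.2 (by exact_mod_cast h0)
    have hG : ∀ k, m < k → φ (k / √m) * chooseRatio m k = 0 := fun k hk => by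
      rw [chooseRatio_eq_zero hk, mul_zero]
    rw [integral_comp_mul_right_Ioi (fun y => φ (⌈y⌉₊ / √m) * chooseRatio m ⌈y⌉₊) 0 h0', zero_mul,
      integral_comp_natCeil hG, smul_eq_mul]
  refine Tendsto.congr' hsum ?_
  refine tendsto_integral_filter_of_dominated_convergence
    (fun x => ((x + 1) + (x + 1) ^ 3) * Real.exp (-(1 / 2) * x ^ 2)) ?_ ?_ ?_ ?_
  · refine Eventually.of_forall fun m => Measurable.aestronglyMeasurable ?_
    exact (measurable_from_nat (f := fun i : ℕ => φ (i / √m) * chooseRatio m i)).comp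
      (Nat.measurable_ceil.comp (measurable_id.mul_const _))
  · filter_upwards [eventually_gt_atTop 0] with m h0
    have hm : (1 : ℝ) ≤ m := by exact_mod_cast h0
    have h1 : 1 ≤ √(m : ℝ) := Real.one_le_sqrt.2 hm
    filter_upwards [ae_restrict_mem measurableSet_Ioi] with x hx
    have hx : 0 < x := hx
    have hs : 0 < √(m : ℝ) := by linarith
    have hxs : 0 < x * √m := by positivity
    set u : ℝ := ⌈x * √m⌉₊ / √m with hu
    have hxu : x ≤ u := by rw [hu, le_div_iff₀ hs]; exact Nat.le_ceil _
    have hux : u ≤ x + 1 := by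
      rw [hu, div_le_iff₀ hs]
      nlinarith [Nat.ceil_lt_add_one hxs.le]
    have hu0 : 0 < u := by linarith
    rw [Real.norm_eq_abs, abs_mul, abs_of_nonneg (chooseRatio_nonneg _ _)]
    refine mul_le_mul ((hb u hu0).trans (by gcongr)) ((chooseRatio_le_exp _ _).trans ?_)
      (chooseRatio_nonneg _ _) (by positivity)
    have : (⌈x * √m⌉₊ : ℝ) ^ 2 / (2 * m) = u ^ 2 / 2 := by
      rw [hu, div_pow, Real.sq_sqrt (by linarith), div_div, mul_comm (2 : ℝ)]
    rw [this]
    apply Real.exp_le_exp.2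
    nlinarith
  · have key : ∀ s : ℕ, IntegrableOn (fun x : ℝ => x ^ s * Real.exp (-(1 / 2) * x ^ 2)) (Ioi 0) :=
      fun s => by
        simpa [Real.rpow_natCast] using integrableOn_rpow_mul_exp_neg_mul_sq
          (b := 1 / 2) (by norm_num) (s := s) (by linarith [Nat.cast_nonneg (α := ℝ) s])
    refine ((((key 0).const_mul 2).add ((key 1).const_mul 4)).add
      (((key 2).const_mul 3).add (key 3))).congr (Eventually.of_forall fun x => ?_)
    simp only [Pi.add_apply]
    ring
  · filter_upwards [ae_restrict_mem measurableSet_Ioi] with x hx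
    exact (((hφ.continuousAt (Ioi_mem_nhds hx)).tendsto).comp
      (tendsto_natCeil_mul_sqrt_div hx)).mul (tendsto_chooseRatio hx)

lemma integral_sq_mul_exp_neg_sq :
    ∫ x in Ioi (0 : ℝ), x ^ 2 * Real.exp (-x ^ 2) = √Real.pi / 4 := by
  have h := integral_rpow_mul_exp_neg_rpow (p := 2) (q := 2) (by norm_num) (by norm_num)
  rw [show ((2 : ℝ) + 1) / 2 = 1 / 2 + 1 by norm_num, Real.Gamma_add_one (by norm_num),
    Real.Gamma_one_half_eq] at h
  simp only [Real.rpow_two] at h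
  rw [h]; ring

lemma hasDerivAt_Gamma_three_half : HasDerivAt Complex.Gamma
    ((√Real.pi * (1 - Real.eulerMascheroniConstant / 2 - Real.log 2) : ℝ) : ℂ) (3 / 2) := by
  have h1 : HasDerivAt (fun s : ℂ => (s - 1) * Complex.Gamma (s - 1))
      (1 * Complex.Gamma (3 / 2 - 1) + (3 / 2 - 1) *
        (-√Real.pi * (Real.eulerMascheroniConstant + 2 * Complex.log 2))) (3 / 2) := by
    refine ((hasDerivAt_id _).sub_const _).mul (HasDerivAt.comp_sub_const _ _ ?_)
    rw [show (3 / 2 - 1 : ℂ) = 1 / 2 by norm_num]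
    exact Complex.hasDerivAt_Gamma_one_half
  have h2 : Complex.Gamma =ᶠ[𝓝 (3 / 2)] fun s : ℂ => (s - 1) * Complex.Gamma (s - 1) := by
    filter_upwards [isOpen_ne.mem_nhds (show (3 / 2 : ℂ) ≠ 1 by norm_num)] with s hs
    rw [← Complex.Gamma_add_one _ (sub_ne_zero.2 hs), sub_add_cancel]
  refine (h1.congr_of_eventuallyEq h2).congr_deriv ?_
  rw [show (3 / 2 - 1 : ℂ) = ((1 / 2 : ℝ) : ℂ) by norm_num, Complex.Gamma_ofReal,
    Real.Gamma_one_half_eq, show Complex.log 2 = ((Real.log 2 : ℝ) : ℂ) by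
      rw [Complex.ofReal_log (by norm_num)]; norm_num]
  push_cast
  ring

lemma integral_sqrt_mul_log_mul_exp_neg :
    ∫ t in Ioi (0 : ℝ), t ^ (1 / 2 : ℝ) * (Real.log t * Real.exp (-t)) =
      √Real.pi * (1 - Real.eulerMascheroniConstant / 2 - Real.log 2) := by
  have h := Complex.hasDerivAt_GammaIntegral (s := 3 / 2) (by norm_num)
  have h2 : Complex.GammaIntegral =ᶠ[𝓝 (3 / 2)] Complex.Gamma := by
    filter_upwards [(isOpen_lt continuous_const Complex.continuous_re).mem_nhds
      (show (0 : ℝ) < (3 / 2 : ℂ).re by norm_num)] with s hs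
    exact (Complex.Gamma_eq_integral hs).symm
  have h3 := h.unique (hasDerivAt_Gamma_three_half.congr_of_eventuallyEq h2)
  rw [← Complex.ofReal_inj, ← h3, ← integral_complex_ofReal]
  refine setIntegral_congr_fun measurableSet_Ioi fun t ht => ?_
  rw [show (3 / 2 - 1 : ℂ) = ((1 / 2 : ℝ) : ℂ) by norm_num, Complex.ofReal_mul,
    Complex.ofReal_cpow (le_of_lt ht)]
  push_cast
  rfl

lemma integral_sq_mul_log_mul_exp_neg_sq :
    ∫ x in Ioi (0 : ℝ), x ^ 2 * Real.log x * Real.exp (-x ^ 2) =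
      √Real.pi / 4 * (1 - Real.eulerMascheroniConstant / 2 - Real.log 2) := by
  have h := integral_comp_rpow_Ioi_of_pos
    (g := fun t : ℝ => t ^ (1 / 2 : ℝ) * (Real.log t * Real.exp (-t))) two_pos
  rw [integral_sqrt_mul_log_mul_exp_neg] at h
  have h2 : ∫ x in Ioi (0 : ℝ), x ^ 2 * Real.log x * Real.exp (-x ^ 2) =
      ∫ x in Ioi (0 : ℝ), (1 / 4) * ((2 * x ^ (2 - 1 : ℝ)) • ((x ^ (2 : ℝ)) ^ (1 / 2 : ℝ) *
        (Real.log (x ^ (2 : ℝ)) * Real.exp (-(x ^ (2 : ℝ)))))) := by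
    refine setIntegral_congr_fun measurableSet_Ioi fun x hx => ?_
    have hx : 0 < x := hx
    simp only [smul_eq_mul]
    rw [← Real.rpow_mul hx.le, Real.log_rpow hx]
    norm_num
    ring
  rw [h2, integral_const_mul, h]
  ring

lemma abs_log_le_add_inv {u : ℝ} (hu : 0 < u) : |Real.log u| ≤ u + u⁻¹ := by
  have h1 := Real.log_le_sub_one_of_pos hu
  have h2 := Real.log_le_sub_one_of_pos (inv_pos.2 hu)
  have := inv_pos.2 hu
  rw [Real.log_inv] at h2
  exact abs_le.2 ⟨by linarith, by linarith⟩

lemma tendsto_mean_log :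
    Tendsto (fun m : ℕ =>
      (∑ i ∈ Finset.Icc 1 m, ((i / √m : ℝ) ^ 2 * Real.log (i / √m)) * chooseRatio m i) /
        ∑ i ∈ Finset.Icc 1 m, (i / √m : ℝ) ^ 2 * chooseRatio m i) atTop
      (𝓝 (1 - Real.eulerMascheroniConstant / 2 - Real.log 2)) := by
  have hA := tendsto_sum_mul_chooseRatio (φ := fun u => u ^ 2 * Real.log u)
    ((continuousOn_pow 2).mul (Real.continuousOn_log.mono fun x hx => ne_of_gt hx))
    (fun u hu => by
      rw [abs_mul, abs_of_pos (by positivity)]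
      calc u ^ 2 * |Real.log u| ≤ u ^ 2 * (u + u⁻¹) := by gcongr; exact abs_log_le_add_inv hu
        _ = _ := by field_simp; ring)
  have hB := tendsto_sum_mul_chooseRatio (φ := fun u => u ^ 2) (continuousOn_pow 2)
    (fun u hu => by
      rw [abs_of_pos (by positivity)]
      nlinarith [sq_nonneg (u - 1), sq_nonneg u])
  rw [integral_sq_mul_log_mul_exp_neg_sq] at hA
  rw [integral_sq_mul_exp_neg_sq] at hB
  have hpi : √Real.pi / 4 ≠ 0 := by positivity
  have h := hA.div hB hpi
  rw [mul_div_cancel_left₀ _ hpi] at h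
  refine h.congr' ?_
  filter_upwards [eventually_gt_atTop 0] with m h0
  have h0' : (√(m : ℝ))⁻¹ ≠ 0 := inv_ne_zero (Real.sqrt_pos.2 (by exact_mod_cast h0)).ne'
  simp only [Pi.div_apply]
  rw [mul_div_mul_left _ _ h0']

/-- for `q = 0`, the average redundancy of Scheme B is
asymptotically `(1/2)log₂ n + 1 + β` where
`β = (2 − ln 4 − γ)/ln 4 − 1/2` (numerically `1 + β ≈ 0.526`). -/
theorem stmt13 :
    Filter.Tendsto (fun m : ℕ =>
      1 + (∑ i ∈ Finset.Icc 1 m,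
            (i : ℝ) * (4*(i : ℝ) / (2*m)) * (Nat.choose (2*m) (m+i)) * Real.logb 2 i)
          / 2^(2*m-1)
        - (1/2) * Real.logb 2 (2*m)) Filter.atTop
      (nhds (1 + ((2 - Real.log 4 - Real.eulerMascheroniConstant) / Real.log 4 - 1/2))) := by
  have hl2 : Real.log 2 ≠ 0 := (Real.log_pos one_lt_two).ne'
  have hl4 : Real.log 4 = 2 * Real.log 2 := by
    rw [show (4 : ℝ) = 2 ^ 2 by norm_num, Real.log_pow]; norm_num
  have h := ((tendsto_mean_log.div_const (Real.log 2)).const_add 1).sub_const (1 / 2)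
  convert h.congr' ?_ using 2
  · rw [hl4]; field_simp; ring
  filter_upwards [eventually_gt_atTop 0] with m h0
  obtain ⟨k, rfl⟩ : ∃ k, m = k + 1 := ⟨m - 1, by omega⟩
  set m := k + 1 with hm
  have hm0 : (0 : ℝ) < m := by exact_mod_cast h0
  have hs : (√m : ℝ) ^ 2 = m := Real.sq_sqrt hm0.le
  have hs0 : 0 < √(m : ℝ) := Real.sqrt_pos.2 hm0
  have hC : (0 : ℝ) < Nat.choose (2 * m) m := by exact_mod_cast Nat.choose_pos (by omega)
  have hpow : (2 : ℝ) ^ (2 * m - 1) = 2 * 4 ^ k := by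
    rw [show 2 * m - 1 = 2 * k + 1 by omega, pow_succ, pow_mul]; norm_num; ring
  have hW : ∑ i ∈ Finset.Icc 1 m, (i : ℝ) ^ 2 * Nat.choose (2 * m) (m + i) = m * 4 ^ k := by
    rw [sum_sq_mul_choose, hm]; push_cast; rfl
  set L := ∑ i ∈ Finset.Icc 1 m, (i : ℝ) ^ 2 * Nat.choose (2 * m) (m + i) * Real.log i with hL
  have hden : ∑ i ∈ Finset.Icc 1 m, (i / √m : ℝ) ^ 2 * chooseRatio m i =
      4 ^ k / Nat.choose (2 * m) m := by
    have : ∀ i ∈ Finset.Icc 1 m, (i / √m : ℝ) ^ 2 * chooseRatio m i =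
        (i : ℝ) ^ 2 * Nat.choose (2 * m) (m + i) / (m * Nat.choose (2 * m) m) := fun i _ => by
      rw [div_pow, hs, chooseRatio, div_mul_div_comm]
    rw [Finset.sum_congr rfl this, ← Finset.sum_div, hW]
    field_simp
  have hnum : ∑ i ∈ Finset.Icc 1 m, ((i / √m : ℝ) ^ 2 * Real.log (i / √m)) * chooseRatio m i =
      (L / m - 4 ^ k * (Real.log m / 2)) / Nat.choose (2 * m) m := by
    have : ∀ i ∈ Finset.Icc 1 m, ((i / √m : ℝ) ^ 2 * Real.log (i / √m)) * chooseRatio m i =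
        ((i : ℝ) ^ 2 * Nat.choose (2 * m) (m + i) * Real.log i -
          (i : ℝ) ^ 2 * Nat.choose (2 * m) (m + i) * (Real.log m / 2)) /
          (m * Nat.choose (2 * m) m) := fun i hi => by
      have hi0 : (i : ℝ) ≠ 0 := by
        have := (Finset.mem_Icc.1 hi).1
        exact_mod_cast (by omega : i ≠ 0)
      rw [div_pow, hs, chooseRatio, Real.log_div hi0 hs0.ne', Real.log_sqrt hm0.le]
      field_simp
    rw [Finset.sum_congr rfl this, ← Finset.sum_div, Finset.sum_sub_distrib, ← Finset.sum_mul, hW, ← hL]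
    field_simp
  have horig : ∑ i ∈ Finset.Icc 1 m,
      (i : ℝ) * (4*(i : ℝ) / (2*m)) * (Nat.choose (2*m) (m+i)) * Real.logb 2 i =
      2 * L / (m * Real.log 2) := by
    rw [hL, Finset.mul_sum, Finset.sum_div]
    refine Finset.sum_congr rfl fun i _ => ?_
    rw [Real.logb]
    field_simp
    ring
  rw [horig, hnum, hden, hpow, Real.logb, Real.log_mul two_ne_zero hm0.ne']
  field_simp
  ring
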